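/- The function q_s is right-continuous at every point of (0,∞): for every x₀ > 0, q_s(x) tends to q_s(x₀) as x tends to x₀ from the right (within [x₀,∞)). -/

import Mathlib

/-! # Right-continuity of the smallest univoque base

Write `val q d` for `∑ d_i q^{-i}`. In a base `q ∈ (1,2]` the sequence `d` is the only expansion of
its value if and only if every tail after a digit `0` has value below `1` and every reflected tail
after a digit `1` has value below `1` (`mem_iff`). Since values decrease as the base grows, a
sequence univoque in one base is univoque in all larger ones (`Good.mono`). Hence
(`exists_base`) a sequence univoque in base `a` provides every number between its values in the
bases `b` and `a` with a univoque base in `[a, b]`.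

*Lower estimate* (`qs_lower`). If `x ≥ x₀` is close to `x₀` and `q ∈ 𝒰(x)` has digits `d`, then
slightly increasing the base lowers the value of `d` from `x` to `x₀`; so `q_s(x₀) ≤ q_s(x) + ε`.

*Upper estimate* (`qs_upper`). Let `q₀ ∈ 𝒰(x₀)`, `q₀ < 2`, with digits `d`. If the conditions on
the tails of `d` hold with a uniform margin, `d` is still univoque in slightly smaller bases, which
reaches the points just to the right of `x₀` (`upper_of_margin`). Otherwise `d` is a limit of larger
sequences `e` univoque in base `q₀`: some tail of `d` can be replaced, arbitrarily late, by another
tail of `d` of larger value (`splice`, `approx_zero`, `approx_one`). As `val q₀ e > x₀` while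
`val (q₀ + ε) e < x₀` for `e` close to `d`, every `x` slightly above `x₀` has a univoque base in
`[q₀, q₀ + ε]` (`upper_of_approx`).

Both estimates use that `𝒰(x)` is nonempty (`univSet_nonempty`), because the infimum of the empty
set is `0` by convention. This is shown with the sequences `1^∞`, `0^k(10)^∞` and `(1001)^∞`.
-/

open Filter Set

noncomputable section

/-- `d` is a `q`-expansion of `x`: all digits lie in `{0,1}` and
`x = ∑_{i=1}^∞ d_i q^{-i}`.  Here `d i` stands for the digit `d_{i+1}`. -/
def IsExpansion (q x : ℝ) (d : ℕ → ℕ) : Prop :=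
  (∀ i, d i ≤ 1) ∧ x = ∑' i : ℕ, (d i : ℝ) / q ^ (i + 1)

/-- `𝒰(x)`: the set of bases `q ∈ (1,2]` in which `x` has a unique expansion. -/
def UnivSet (x : ℝ) : Set ℝ :=
  {q | q ∈ Set.Ioc (1 : ℝ) 2 ∧ ∃! d : ℕ → ℕ, IsExpansion q x d}

/-- `q_s(x) = inf 𝒰(x)`. -/
def qs (x : ℝ) : ℝ := sInf (UnivSet x)

/-- The level set `L(q) = {x > 0 : q_s(x) = q}`. -/
def levelSet (q : ℝ) : Set ℝ := {x | 0 < x ∧ qs x = q}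

/-- The golden ratio `q_G = (1+√5)/2`. -/
def qG : ℝ := (1 + Real.sqrt 5) / 2

/-- The Thue–Morse sequence: `tm i = s_i mod 2`, where `s_i` is the number of
`1`s in the binary representation of `i`. -/
def tm (i : ℕ) : ℕ := (Nat.digits 2 i).sum % 2

/-- The set `S ⊆ ℕ`: `2, 3, 4 ∈ S`, and for `k ≥ 2` and `2^k < n ≤ 2^{k+1}`,
`n ∈ S` iff `n > 3·2^{k-1}` and `n - 3·2^{k-1} ∈ S`; no other elements. -/
inductive memS : ℕ → Prop
  | two : memS 2
  | three : memS 3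
  | four : memS 4
  | step (k n : ℕ) (hk : 2 ≤ k) (h1 : 2 ^ k < n) (h2 : n ≤ 2 ^ (k + 1))
      (h3 : 3 * 2 ^ (k - 1) < n) (h : memS (n - 3 * 2 ^ (k - 1))) : memS n

/-! ### Values of digit sequences -/

/-- The value `∑ d_i q^{-i}` of a digit sequence in base `q` (digits indexed from `0`). -/
def val (q : ℝ) (d : ℕ → ℕ) : ℝ := ∑' i : ℕ, (d i : ℝ) / q ^ (i + 1)

/-- The tail of `d` starting at index `n`. -/
def sh (n : ℕ) (d : ℕ → ℕ) : ℕ → ℕ := fun i => d (i + n)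

/-- The reflection of a `0`-`1` sequence. -/
def co (d : ℕ → ℕ) : ℕ → ℕ := fun i => 1 - d i

/-- The digit sequence `d` is univoque in base `q`: the tail after each digit `0` has value below
`1`, and the reflected tail after each digit `1` has value below `1`. -/
def Good (q : ℝ) (d : ℕ → ℕ) : Prop :=
  (∀ i, d i ≤ 1) ∧ ∀ i, (d i = 0 → val q (sh (i + 1) d) < 1) ∧
    (d i = 1 → val q (co (sh (i + 1) d)) < 1)

theorem co_le (d : ℕ → ℕ) : ∀ i, co d i ≤ 1 := fun i => by simp [co]

theorem sh_le {d : ℕ → ℕ} (hd : ∀ i, d i ≤ 1) (n : ℕ) : ∀ i, sh n d i ≤ 1 := fun _ => hd _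

theorem sh_zero (d : ℕ → ℕ) : sh 0 d = d := rfl

theorem sh_sh (m n : ℕ) (d : ℕ → ℕ) : sh m (sh n d) = sh (m + n) d := by
  funext i; simp [sh, add_assoc]

theorem hasSum_geo {q : ℝ} (hq : 1 < q) :
    HasSum (fun i : ℕ => 1 / q ^ (i + 1)) (1 / (q - 1)) := by
  have h := (hasSum_geometric_of_lt_one (r := q⁻¹) (by positivity)
    (inv_lt_one_of_one_lt₀ hq)).mul_left q⁻¹
  have e : q⁻¹ * (1 - q⁻¹)⁻¹ = 1 / (q - 1) := by
    have h0 : q ≠ 0 := by positivity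
    have h1 : q - 1 ≠ 0 := by linarith
    rw [← mul_inv, mul_sub, mul_one, mul_inv_cancel₀ h0, one_div]
  rw [e] at h
  refine Eq.mp (congrArg (HasSum · _) (funext fun i => ?_)) h
  rw [pow_succ, inv_pow]
  field_simp

theorem term_le {q : ℝ} (hq : 1 < q) {d : ℕ → ℕ} (hd : ∀ i, d i ≤ 1) (i : ℕ) :
    (d i : ℝ) / q ^ (i + 1) ≤ 1 / q ^ (i + 1) := by
  have : (d i : ℝ) ≤ 1 := by exact_mod_cast hd i
  gcongr

theorem summ {q : ℝ} (hq : 1 < q) {d : ℕ → ℕ} (hd : ∀ i, d i ≤ 1) :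
    Summable fun i : ℕ => (d i : ℝ) / q ^ (i + 1) :=
  Summable.of_nonneg_of_le (fun i => by positivity) (term_le hq hd) (hasSum_geo hq).summable

theorem val_nonneg {q : ℝ} (hq : 1 < q) (d : ℕ → ℕ) : 0 ≤ val q d :=
  tsum_nonneg fun _ => by positivity

theorem val_le {q : ℝ} (hq : 1 < q) {d : ℕ → ℕ} (hd : ∀ i, d i ≤ 1) :
    val q d ≤ 1 / (q - 1) := by
  rw [← (hasSum_geo hq).tsum_eq]
  exact (summ hq hd).tsum_le_tsum (term_le hq hd) (hasSum_geo hq).summable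

theorem val_co {q : ℝ} (hq : 1 < q) {d : ℕ → ℕ} (hd : ∀ i, d i ≤ 1) :
    val q (co d) = 1 / (q - 1) - val q d := by
  have h := (hasSum_geo hq).sub (summ hq hd).hasSum
  rw [val, ← show _ = 1 / (q - 1) - val q d from h.tsum_eq]
  congr 1
  funext i
  simp only [co]
  rw [Nat.cast_sub (hd i)]
  push_cast
  ring

theorem val_prefix {q : ℝ} (hq : 1 < q) {d : ℕ → ℕ} (hd : ∀ i, d i ≤ 1) (n : ℕ) :
    val q d = ∑ i ∈ Finset.range n, (d i : ℝ) / q ^ (i + 1) + val q (sh n d) / q ^ n := by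
  rw [val, ← (summ hq hd).sum_add_tsum_nat_add n, val, ← tsum_div_const]
  congr 2
  funext i
  simp only [sh]
  rw [div_div, ← pow_add]
  congr 2
  ring

theorem val_step {q : ℝ} (hq : 1 < q) {d : ℕ → ℕ} (hd : ∀ i, d i ≤ 1) :
    q * val q d = d 0 + val q (sh 1 d) := by
  have h := val_prefix hq hd 1
  have h0 : q ≠ 0 := by positivity
  rw [h]
  simp
  field_simp

theorem val_anti {p q : ℝ} (hp : 1 < p) (hpq : p ≤ q) {d : ℕ → ℕ} (hd : ∀ i, d i ≤ 1) :
    val q d ≤ val p d :=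
  (summ (hp.trans_le hpq) hd).tsum_le_tsum (fun _ => by gcongr) (summ hp hd)

/-- Passing from base `p` to base `q > p` shrinks a value by at least the factor `p / q`,
uniformly over all digit sequences. -/
theorem val_scale {p q : ℝ} (hp : 1 < p) (hpq : p ≤ q) {d : ℕ → ℕ} (hd : ∀ i, d i ≤ 1) :
    q * val q d ≤ p * val p d := by
  rw [val_step hp hd, val_step (hp.trans_le hpq) hd]
  gcongr
  exact val_anti hp hpq (sh_le hd 1)

theorem val_lip {p q : ℝ} (hp : 1 < p) (hpq : p ≤ q) {d : ℕ → ℕ} (hd : ∀ i, d i ≤ 1) :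
    val p d - val q d ≤ 1 / (p - 1) - 1 / (q - 1) := by
  have h := val_anti hp hpq (co_le d)
  rw [val_co hp hd, val_co (hp.trans_le hpq) hd] at h
  linarith

theorem val_cont {a b : ℝ} (ha : 1 < a) {d : ℕ → ℕ} (hd : ∀ i, d i ≤ 1) :
    ContinuousOn (fun q => val q d) (Icc a b) := by
  refine continuousOn_tsum (u := fun i : ℕ => 1 / a ^ (i + 1)) ?_ (hasSum_geo ha).summable ?_
  · intro i q hq
    have : q ^ (i + 1) ≠ 0 := by
      have : 0 < q := by linarith [hq.1]
      positivity
    exact (continuousAt_const.div (continuousAt_id.pow _) this).continuousWithinAt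
  · intro i q hq
    have h1 : 1 < q := ha.trans_le hq.1
    rw [Real.norm_of_nonneg (by positivity)]
    refine (term_le h1 hd i).trans ?_
    have := hq.1
    gcongr

theorem Good.mono {p q : ℝ} (hp : 1 < p) (hpq : p ≤ q) {d : ℕ → ℕ} (h : Good p d) :
    Good q d :=
  ⟨h.1, fun i => ⟨fun hi => (val_anti hp hpq (sh_le h.1 _)).trans_lt ((h.2 i).1 hi),
    fun hi => (val_anti hp hpq (co_le _)).trans_lt ((h.2 i).2 hi)⟩⟩

/-! ### Univoque sequences and unique expansions -/

/-- Remainders of the greedy algorithm. -/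
def grem (q v : ℝ) : ℕ → ℝ
  | 0 => v
  | n + 1 => if 1 ≤ q * grem q v n then q * grem q v n - 1 else q * grem q v n

open Classical in
/-- Digits of the greedy algorithm. -/
def gdig (q v : ℝ) (n : ℕ) : ℕ := if 1 ≤ q * grem q v n then 1 else 0

theorem grem_mem {q v : ℝ} (hq : q ∈ Ioc (1 : ℝ) 2) (hv : 0 ≤ v) (hv' : v ≤ 1 / (q - 1)) (n : ℕ) :
    0 ≤ grem q v n ∧ grem q v n ≤ 1 / (q - 1) := by
  obtain ⟨h1, h2⟩ := hq
  have h3 : 0 < q - 1 := by linarith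
  induction n with
  | zero => exact ⟨hv, hv'⟩
  | succ n ih =>
    obtain ⟨a, b⟩ := ih
    rw [grem]
    rw [le_div_iff₀ h3] at b ⊢
    split_ifs with h
    · exact ⟨by linarith, by nlinarith⟩
    · push Not at h
      exact ⟨by positivity, by nlinarith⟩

theorem exists_expansion {q v : ℝ} (hq : q ∈ Ioc (1 : ℝ) 2) (hv : 0 ≤ v)
    (hv' : v ≤ 1 / (q - 1)) : ∃ d : ℕ → ℕ, (∀ i, d i ≤ 1) ∧ val q d = v := by
  have hd : ∀ i, gdig q v i ≤ 1 := fun i => by unfold gdig; split_ifs <;> simp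
  refine ⟨gdig q v, hd, ?_⟩
  have h0 : 0 < q := by linarith [hq.1]
  have key : ∀ n, ∑ i ∈ Finset.range n, (gdig q v i : ℝ) / q ^ (i + 1) = v - grem q v n / q ^ n := by
    intro n
    induction n with
    | zero => simp [grem]
    | succ n ih =>
      rw [Finset.sum_range_succ, ih, grem, gdig]
      split_ifs <;> · push_cast; field_simp; ring
  have hs := (summ hq.1 hd).hasSum.tendsto_sum_nat
  refine tendsto_nhds_unique hs ?_
  simp_rw [key]
  have hz : Tendsto (fun n => grem q v n / q ^ n) atTop (nhds 0) := by
    have h4 : Tendsto (fun n : ℕ => 1 / (q - 1) * (q⁻¹) ^ n) atTop (nhds 0) := by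
      simpa using (tendsto_pow_atTop_nhds_zero_of_lt_one (r := q⁻¹) (by positivity)
        (inv_lt_one_of_one_lt₀ hq.1)).const_mul (1 / (q - 1))
    refine squeeze_zero (fun n => ?_) (fun n => ?_) h4
    · have := (grem_mem hq hv hv' n).1
      positivity
    · have := (grem_mem hq hv hv' n).2
      rw [inv_pow, ← div_eq_mul_inv]
      gcongr
  simpa using tendsto_const_nhds.sub hz

theorem eq_tail {q : ℝ} (hq : 1 < q) {d e : ℕ → ℕ} (hd : ∀ i, d i ≤ 1) (he : ∀ i, e i ≤ 1)
    {n : ℕ} (h : ∀ i < n, d i = e i) :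
    val q d - val q e = (val q (sh n d) - val q (sh n e)) / q ^ n := by
  rw [val_prefix hq hd n, val_prefix hq he n]
  rw [Finset.sum_congr rfl fun i hi => by rw [h i (Finset.mem_range.1 hi)]]
  ring

theorem Good.unique {q : ℝ} (hq : 1 < q) {d : ℕ → ℕ} (h : Good q d) {e : ℕ → ℕ}
    (he : ∀ i, e i ≤ 1) (hv : val q e = val q d) : e = d := by
  by_contra hne
  have hex : ∃ n, e n ≠ d n := by
    by_contra! hc
    exact hne (funext hc)
  classical
  let n := Nat.find hex
  have hn : e n ≠ d n := Nat.find_spec hex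
  have hlt : ∀ i < n, e i = d i := fun i hi => not_not.1 (Nat.find_min hex hi)
  have h1 := eq_tail hq he h.1 hlt
  have h0 : 0 < q ^ n := by positivity
  rw [hv, sub_self, eq_comm, div_eq_zero_iff, or_iff_left h0.ne', sub_eq_zero] at h1
  have h2 := val_step hq (sh_le he n)
  have h3 := val_step hq (sh_le h.1 n)
  rw [sh_sh, add_comm 1 n] at h2 h3
  simp only [sh, zero_add] at h2 h3
  rw [h1] at h2
  rw [h2] at h3
  have a := h.1 n
  have b := he n
  have cs : (d n = 0 ∧ e n = 1) ∨ (d n = 1 ∧ e n = 0) := by omega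
  rcases cs with ⟨c, c'⟩ | ⟨c, c'⟩
  · have := (h.2 n).1 c
    rw [c, c'] at h3
    push_cast at h3
    linarith [val_nonneg hq (sh (n + 1) e)]
  · have := (h.2 n).2 c
    rw [val_co hq (sh_le h.1 _)] at this
    rw [c, c'] at h3
    push_cast at h3
    linarith [val_le hq (sh_le he (n + 1))]

/-- If a digit `0` is followed by a tail of value at least `1`, this digit can be raised to `1`
and the tail replaced, which produces a second expansion. -/
theorem second_expansion {q : ℝ} (hq : q ∈ Ioc (1 : ℝ) 2) {d : ℕ → ℕ} (hd : ∀ i, d i ≤ 1) {n : ℕ}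
    (hn : d n = 0) (h : 1 ≤ val q (sh (n + 1) d)) :
    ∃ e : ℕ → ℕ, (∀ i, e i ≤ 1) ∧ val q e = val q d ∧ e ≠ d := by
  obtain ⟨t, ht, htv⟩ := exists_expansion hq (v := val q (sh (n + 1) d) - 1) (by linarith)
    (by linarith [val_le hq.1 (sh_le hd (n + 1))])
  let e : ℕ → ℕ := fun i => if i < n then d i else if i = n then 1 else t (i - (n + 1))
  have he : ∀ i, e i ≤ 1 := fun i => by
    simp only [e]
    split_ifs
    exacts [hd i, le_rfl, ht _]
  refine ⟨e, he, ?_, fun h => ?_⟩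
  · have h1 := eq_tail hq.1 he hd (n := n) fun i hi => by simp [e, hi]
    have h2 := val_step hq.1 (sh_le he n)
    have h3 := val_step hq.1 (sh_le hd n)
    rw [sh_sh, add_comm 1 n] at h2 h3
    have h4 : sh (n + 1) e = t := by
      funext i
      simp only [sh, e]
      rw [if_neg (by omega), if_neg (by omega), Nat.add_sub_cancel]
    have h5 : sh n e 0 = 1 := by simp [sh, e]
    have h6 : sh n d 0 = 0 := by simp [sh, hn]
    rw [h4, h5, htv] at h2
    rw [h6] at h3
    push_cast at h2 h3
    have h7 : q * val q (sh n e) = q * val q (sh n d) := by linarith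
    have h8 := mul_left_cancel₀ (by linarith [hq.1]) h7
    rw [h8, sub_self, zero_div] at h1
    linarith
  · have := congrFun h n
    simp [e, hn] at this

theorem co_co {d : ℕ → ℕ} (hd : ∀ i, d i ≤ 1) : co (co d) = d := by
  funext i
  have := hd i
  simp only [co]
  omega

theorem mem_iff {q x : ℝ} :
    q ∈ UnivSet x ↔ q ∈ Ioc (1 : ℝ) 2 ∧ ∃ d, Good q d ∧ val q d = x := by
  refine and_congr_right fun hq => ⟨?_, ?_⟩
  · rintro ⟨d, ⟨hd, hx⟩, hu⟩
    change x = val q d at hx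
    refine ⟨d, ⟨hd, fun i => ⟨fun hi => ?_, fun hi => ?_⟩⟩, hx.symm⟩
    · by_contra! hc
      obtain ⟨e, he, hv, hne⟩ := second_expansion hq hd hi hc
      exact hne (hu e ⟨he, hx.trans hv.symm⟩)
    · by_contra! hc
      obtain ⟨e, he, hv, hne⟩ := second_expansion hq (co_le d) (n := i) (by simp [co, hi]) hc
      refine hne ?_
      have h1 : co e = d := by
        refine hu (co e) ⟨co_le e, hx.trans (Eq.symm ?_)⟩
        change val q (co e) = _
        rw [val_co hq.1 he, hv, val_co hq.1 hd]
        ring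
      rw [← h1, co_co he]
  · rintro ⟨d, h, hx⟩
    exact ⟨d, ⟨h.1, hx.symm⟩, fun e he => h.unique hq.1 he.1 (he.2.symm.trans hx.symm)⟩

/-- A sequence univoque in base `a` realises every value between its values in the bases
`b ≥ a` and `a`, uniquely, in a base from `[a, b]`. -/
theorem exists_base {a b x : ℝ} (ha : 1 < a) (hab : a ≤ b) (hb : b ≤ 2) {d : ℕ → ℕ}
    (h : Good a d) (h1 : val b d ≤ x) (h2 : x ≤ val a d) : ∃ q ∈ UnivSet x, a ≤ q ∧ q ≤ b := by
  obtain ⟨q, hq, hv⟩ := intermediate_value_Icc' hab (val_cont ha h.1) ⟨h1, h2⟩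
  exact ⟨q, mem_iff.2 ⟨⟨ha.trans_le hq.1, hq.2.trans hb⟩, d, h.mono ha hq.1, hv⟩, hq⟩

/-! ### Nonemptiness of `UnivSet x` -/

/-- Prepend a digit `0`. -/
def cons0 (d : ℕ → ℕ) : ℕ → ℕ
  | 0 => 0
  | n + 1 => d n

theorem cons0_le {d : ℕ → ℕ} (hd : ∀ i, d i ≤ 1) : ∀ i, cons0 d i ≤ 1
  | 0 => by simp [cons0]
  | n + 1 => hd n

theorem sh_cons0 (n : ℕ) (d : ℕ → ℕ) : sh (n + 1) (cons0 d) = sh n d := rfl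

theorem val_cons0 {q : ℝ} (hq : 1 < q) {d : ℕ → ℕ} (hd : ∀ i, d i ≤ 1) :
    val q (cons0 d) = val q d / q := by
  have h := val_step hq (cons0_le hd)
  rw [sh_cons0, sh_zero] at h
  simp only [cons0] at h
  rw [eq_div_iff (by positivity), mul_comm, h]
  simp

theorem Good.cons0 {q : ℝ} {d : ℕ → ℕ} (h : Good q d) (h1 : val q d < 1) :
    Good q (cons0 d) := by
  refine ⟨cons0_le h.1, ?_⟩
  rintro (_ | i)
  · exact ⟨fun _ => h1, fun hi => absurd hi (by simp [_root_.cons0])⟩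
  · exact h.2 i

theorem iterate_cons0 {q : ℝ} (hq : 1 < q) {d : ℕ → ℕ} (h : Good q d) (h1 : val q d < 1) (k : ℕ) :
    Good q (cons0^[k] d) ∧ val q (cons0^[k] d) = val q d / q ^ k := by
  induction k with
  | zero => simpa using h
  | succ k ih =>
    rw [Function.iterate_succ_apply']
    constructor
    · refine ih.1.cons0 ?_
      rw [ih.2]
      exact (div_le_self (val_nonneg hq d) (one_le_pow₀ hq.le)).trans_lt h1
    · rw [val_cons0 hq ih.1.1, ih.2, div_div, pow_succ]

/-- The sequence `(10)^∞`. -/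
def per2 (i : ℕ) : ℕ := (i + 1) % 2

/-- The sequence `(1001)^∞`. -/
def per4 (i : ℕ) : ℕ := if i % 4 = 0 ∨ i % 4 = 3 then 1 else 0

theorem per2_le : ∀ i, per2 i ≤ 1 := fun i => by unfold per2; omega

theorem per4_le : ∀ i, per4 i ≤ 1 := fun i => by unfold per4; split_ifs <;> simp

theorem val_per2 {q : ℝ} (hq : 1 < q) : val q per2 = q / (q ^ 2 - 1) := by
  have h := val_step hq per2_le
  have h' := val_step hq (sh_le per2_le 1)
  have e : sh 2 per2 = per2 := by funext i; simp only [sh, per2]; omega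
  rw [sh_sh, e] at h'
  simp only [per2, sh] at h h'
  norm_num at h h'
  change q * val q (sh 1 per2) = val q per2 at h'
  change q * val q per2 = 1 + val q (sh 1 per2) at h
  have h3 : q ^ 2 - 1 ≠ 0 := by nlinarith
  rw [eq_div_iff h3]
  linear_combination q * h + h'

theorem good_per2 {q : ℝ} (h : val q per2 < 1) : Good q per2 := by
  refine ⟨per2_le, fun i => ⟨fun hi => ?_, fun hi => ?_⟩⟩
  · convert h using 2
    funext j
    simp only [sh, per2] at *
    omega
  · convert h using 2
    funext j
    simp only [sh, per2, co] at *
    omega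

theorem per4_rel {q : ℝ} (hq : 1 < q) :
    q * val q per4 = 1 + val q (sh 1 per4) ∧ q * val q (sh 1 per4) = val q (sh 2 per4) ∧
    q * val q (sh 2 per4) = val q (sh 3 per4) ∧ q * val q (sh 3 per4) = 1 + val q per4 := by
  have e : sh 4 per4 = per4 := by
    funext i
    simp [sh, per4]
  have h0 := val_step hq per4_le
  have h1 := val_step hq (sh_le per4_le 1)
  have h2 := val_step hq (sh_le per4_le 2)
  have h3 := val_step hq (sh_le per4_le 3)
  rw [sh_sh] at h1 h2 h3
  rw [show 1 + 3 = 4 from rfl, e] at h3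
  have c0 : per4 0 = 1 := rfl
  have c1 : sh 1 per4 0 = 0 := rfl
  have c2 : sh 2 per4 0 = 0 := rfl
  have c3 : sh 3 per4 0 = 1 := rfl
  rw [c0] at h0
  rw [c1] at h1
  rw [c2] at h2
  rw [c3] at h3
  norm_num at h0 h1 h2 h3
  exact ⟨h0, h1, h2, h3⟩

theorem good_per4 {q : ℝ} (hq : 1 < q) (h : val q (sh 3 per4) < 1) : Good q per4 := by
  have h2 : val q (sh 2 per4) < 1 := by
    have := (per4_rel hq).2.2.1
    nlinarith [val_nonneg hq (sh 2 per4)]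
  refine ⟨per4_le, fun i => ?_⟩
  have c : i % 4 = 0 ∨ i % 4 = 1 ∨ i % 4 = 2 ∨ i % 4 = 3 := by omega
  rcases c with c | c | c | c
  · refine ⟨fun hi => absurd hi (by simp [per4, c]), fun _ => ?_⟩
    convert h using 2
    funext j
    simp only [sh, per4, co]
    split_ifs <;> omega
  · refine ⟨fun _ => ?_, fun hi => absurd hi (by simp [per4, c])⟩
    convert h2 using 2
    funext j
    simp only [sh, per4]
    split_ifs <;> omega
  · refine ⟨fun _ => ?_, fun hi => absurd hi (by simp [per4, c])⟩
    convert h using 2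
    funext j
    simp only [sh, per4]
    split_ifs <;> omega
  · refine ⟨fun hi => absurd hi (by simp [per4, c]), fun _ => ?_⟩
    convert h2 using 2
    funext j
    simp only [sh, per4, co]
    split_ifs <;> omega

theorem univSet_nonempty {x : ℝ} (hx : 0 < x) : (UnivSet x).Nonempty := by
  by_cases h1 : 1 ≤ x
  -- for `x ≥ 1` take `1^∞` in base `1 + 1 / x`
  · have hq : 1 < 1 + 1 / x := by simp [hx]
    have hz : val (1 + 1 / x) (fun _ => 0) = 0 := by simp [val]
    refine ⟨1 + 1 / x, mem_iff.2 ⟨⟨hq, ?_⟩, fun _ => 1, ⟨fun _ => le_rfl, fun i => ⟨fun h => ?_,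
      fun _ => ?_⟩⟩, ?_⟩⟩
    · have : 1 / x ≤ 1 := by rwa [div_le_one hx]
      linarith
    · simp at h
    · change val (1 + 1 / x) (fun _ => 0) < 1
      rw [hz]
      exact one_pos
    · have := val_co hq (d := fun _ => 1) fun _ => le_rfl
      change val (1 + 1 / x) (fun _ => 0) = _ at this
      rw [hz] at this
      have h5 : 1 / (1 + 1 / x - 1) = x := by rw [add_sub_cancel_left, one_div_one_div]
      linarith
  push Not at h1
  by_cases h2 : 2 / 3 ≤ x
  -- for `2/3 ≤ x < 1` solve `q / (q ^ 2 - 1) = x` for the base of `(10)^∞`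
  · let s := Real.sqrt (1 + 4 * x ^ 2)
    have hs : s ^ 2 = 1 + 4 * x ^ 2 := Real.sq_sqrt (by positivity)
    have hs0 : 0 ≤ s := Real.sqrt_nonneg _
    have hs1 : 2 * x < s := by nlinarith
    have hs2 : s ≤ 4 * x - 1 := by nlinarith
    let q := (1 + s) / (2 * x)
    have hqx : q * (2 * x) = 1 + s := div_mul_cancel₀ _ (by positivity)
    have hq1 : 1 < q := by nlinarith
    have hq2 : q ≤ 2 := by nlinarith
    have hv : val q per2 = x := by
      rw [val_per2 hq1, div_eq_iff (by nlinarith)]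
      have : (q * (2 * x) - 1) ^ 2 = s ^ 2 := by rw [hqx]; ring
      have h4 : 4 * x * (x * q ^ 2 - q - x) = 0 := by linear_combination this + hs
      have h5 := (mul_eq_zero.1 h4).resolve_left (by positivity)
      linarith
    exact ⟨q, mem_iff.2 ⟨⟨hq1, hq2⟩, per2, good_per2 (by rw [hv]; exact h1), hv⟩⟩
  push Not at h2
  by_cases h3 : 3 / 5 ≤ x
  -- between `3/5` and `2/3` use `(1001)^∞` in bases from `[1.76, 2]`
  · have ha : (1 : ℝ) < 44 / 25 := by norm_num
    obtain ⟨a0, a1, a2, a3⟩ := per4_rel ha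
    obtain ⟨b0, b1, b2, b3⟩ := per4_rel (one_lt_two (α := ℝ))
    obtain ⟨q, hq, -⟩ := exists_base (x := x) ha (by norm_num) le_rfl
      (good_per4 ha (by linarith)) (by linarith) (by linarith)
    exact ⟨q, hq⟩
  push Not at h3
  -- below `3/5` use `0^k(10)^∞` in bases from `[1.63, 2]`
  have ha : (1 : ℝ) < 163 / 100 := by norm_num
  have hva := val_per2 ha
  have hvb := val_per2 (one_lt_two (α := ℝ))
  have hga := iterate_cons0 ha (good_per2 (by rw [hva]; norm_num)) (by rw [hva]; norm_num)
  have hgb := iterate_cons0 (one_lt_two (α := ℝ)) (good_per2 (by rw [hvb]; norm_num))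
    (by rw [hvb]; norm_num)
  obtain ⟨n, hn1, hn2⟩ := exists_nat_pow_near_of_lt_one (x := x * (3 / 2)) (y := (1 / 2 : ℝ))
    (by positivity) (by linarith) (by norm_num) (by norm_num)
  have hx1 : val 2 (cons0^[n + 1] per2) ≤ x := by
    rw [(hgb _).2, hvb]
    rw [one_div, inv_pow] at hn1
    norm_num [div_eq_mul_inv] at hn1 ⊢
    linarith
  have hx2 : x ≤ val (163 / 100) (cons0^[n + 1] per2) := by
    rw [(hga _).2, hva]
    rcases n with _ | n
    · norm_num
      linarith
    · have h5 : ((1 : ℝ) / 2) ^ n ≤ (100 / 163) ^ n :=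
        pow_le_pow_left₀ (by norm_num) (by norm_num) n
      have h6 : ((163 : ℝ) / 100) ^ (n + 1 + 1) = (163 / 100) ^ 2 * ((100 / 163) ^ n)⁻¹ := by
        rw [← inv_pow]
        norm_num [pow_succ]
        ring
      rw [h6]
      have h7 : (0 : ℝ) < (100 / 163) ^ n := by positivity
      rw [div_mul_eq_div_div, div_inv_eq_mul]
      norm_num at h5 h7 hn2 ⊢
      rw [pow_succ] at hn2
      linarith
  obtain ⟨q, hq, -⟩ := exists_base ha (by norm_num) le_rfl (hga _).1 hx1 hx2
  exact ⟨q, hq⟩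

/-! ### Comparison of nearby points -/

theorem qs_le {x q : ℝ} (h : q ∈ UnivSet x) : qs x ≤ q :=
  csInf_le ⟨1, fun _ hp => hp.1.1.le⟩ h

/-- Lower estimate: a univoque base `q` of a point `x` slightly to the right of `x₀` gives a
univoque base of `x₀` not much above `q`, obtained by increasing `q` with the digits fixed. -/
theorem qs_lower {x₀ x ε q : ℝ} (hx₀ : 0 < x₀) (hε : 0 < ε) (h : x₀ ≤ x)
    (h' : x ≤ (1 + ε / 2) * x₀) (hq : q ∈ UnivSet x) : qs x₀ ≤ q + ε := by
  by_cases h2 : q + ε ≤ 2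
  · obtain ⟨⟨hq1, hq2⟩, d, hd, hv⟩ := mem_iff.1 hq
    have hs := val_scale hq1 (show q ≤ q + ε by linarith) hd.1
    have hle : val (q + ε) d ≤ x₀ := by
      rw [hv] at hs
      have : q * x ≤ (q + ε) * x₀ := by nlinarith [mul_pos hε hx₀]
      exact le_of_mul_le_mul_left (hs.trans this) (by linarith)
    obtain ⟨p, hp, -, hp2⟩ := exists_base hq1 (by linarith) h2 hd hle (hv ▸ h)
    exact (qs_le hp).trans hp2
  · obtain ⟨p, hp⟩ := univSet_nonempty hx₀
    linarith [qs_le hp, hp.1.2]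

/-! ### Approximation from above by univoque sequences -/

/-- Replacing the tail of a univoque sequence after index `n` by a tail of larger value
`val q (sh m' d)` keeps it univoque as soon as the increments at the earlier zeros are small. -/
theorem splice {q : ℝ} (hq : 1 < q) {d : ℕ → ℕ} (h : Good q d) {n m' : ℕ}
    (hlt : val q (sh (n + 1) d) < val q (sh m' d))
    (H : ∀ i ≤ n, d i = 0 → val q (sh (i + 1) d) +
      (val q (sh m' d) - val q (sh (n + 1) d)) / q ^ (n - i) < 1) :
    ∃ e, Good q e ∧ (∀ i ≤ n, e i = d i) ∧ val q d < val q e := by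
  let e : ℕ → ℕ := fun i => if i ≤ n then d i else d (i - (n + 1) + m')
  have he : ∀ i, e i ≤ 1 := fun i => by simp only [e]; split_ifs <;> exact h.1 _
  have hag : ∀ i ≤ n, e i = d i := fun i hi => by simp [e, hi]
  have hsh : ∀ j, sh (j + (n + 1)) e = sh (j + m') d := fun j => by
    funext i
    simp only [sh, e]
    rw [if_neg (by omega)]
    congr 1
    omega
  have hsh0 : sh (n + 1) e = sh m' d := by simpa using hsh 0
  have hdiff : ∀ i ≤ n + 1, val q (sh i e) - val q (sh i d) =
      (val q (sh m' d) - val q (sh (n + 1) d)) / q ^ (n + 1 - i) := fun i hi => by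
    rw [eq_tail hq (sh_le he i) (sh_le h.1 i) (n := n + 1 - i), sh_sh, sh_sh,
      Nat.sub_add_cancel hi, hsh0]
    intro j hj
    exact hag _ (by omega)
  have hpos : ∀ k : ℕ, 0 < (val q (sh m' d) - val q (sh (n + 1) d)) / q ^ k := fun k => by
    have : 0 < val q (sh m' d) - val q (sh (n + 1) d) := by linarith
    positivity
  refine ⟨e, ⟨he, fun i => ?_⟩, hag, ?_⟩
  · by_cases hi : i ≤ n
    · have hd1 := hdiff (i + 1) (by omega)
      rw [Nat.add_sub_add_right] at hd1
      rw [hag i hi]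
      refine ⟨fun h0 => ?_, fun h0 => ?_⟩
      · linarith [H i hi h0]
      · have := (h.2 i).2 h0
        rw [val_co hq (sh_le h.1 _)] at this
        rw [val_co hq (sh_le he _)]
        linarith [hpos (n - i)]
    · obtain ⟨j, rfl⟩ : ∃ j, i = j + (n + 1) := ⟨i - (n + 1), by omega⟩
      have e1 : e (j + (n + 1)) = d (j + m') := by simpa [sh] using congrFun (hsh j) 0
      have e2 : sh (j + (n + 1) + 1) e = sh (j + m' + 1) d := by
        rw [show j + (n + 1) + 1 = (j + 1) + (n + 1) by ring, hsh,
          show j + m' + 1 = j + 1 + m' by ring]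
      rw [e1, e2]
      exact h.2 _
  · have := hdiff 0 (by omega)
    rw [sh_zero, sh_zero] at this
    linarith [hpos (n + 1 - 0)]

/-- A finite set of indices bounds away from `1` any quantity that stays below `1`. -/
theorem exists_bound (P : ℕ → Prop) (f : ℕ → ℝ) (h : ∀ i, P i → f i < 1) (N : ℕ) :
    ∃ M < 1, ∀ i ≤ N, P i → f i ≤ M := by
  induction N with
  | zero =>
    by_cases hP : P 0
    · exact ⟨f 0, h 0 hP, fun i hi _ => by rw [Nat.le_zero.1 hi]⟩
    · exact ⟨0, one_pos, fun i hi hi' => absurd (Nat.le_zero.1 hi ▸ hi') hP⟩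
  | succ N ih =>
    obtain ⟨M, hM, hb⟩ := ih
    by_cases hP : P (N + 1)
    · refine ⟨max M (f (N + 1)), max_lt hM (h _ hP), fun i hi hi' => ?_⟩
      rcases Nat.le_succ_iff.1 hi with hi | rfl
      · exact (hb i hi hi').trans (le_max_left _ _)
      · exact le_max_right _ _
    · refine ⟨M, hM, fun i hi hi' => ?_⟩
      rcases Nat.le_succ_iff.1 hi with hi | rfl
      · exact hb i hi hi'
      · exact absurd hi' hP

/-- If the tails after zeros come arbitrarily close to `1`, then `d` is a limit of larger univoque
sequences: cut at a record time and continue with a later, higher tail. -/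
theorem approx_zero {q : ℝ} (hq : 1 < q) {d : ℕ → ℕ} (h : Good q d)
    (hA : ∀ M < 1, ∃ i, d i = 0 ∧ M < val q (sh (i + 1) d)) (N : ℕ) :
    ∃ e, Good q e ∧ (∀ i ≤ N, e i = d i) ∧ val q d < val q e := by
  classical
  obtain ⟨M, hM, hb⟩ := exists_bound (fun i => d i = 0) (fun i => val q (sh (i + 1) d))
    (fun i hi => (h.2 i).1 hi) N
  let n := Nat.find (hA M hM)
  obtain ⟨hn0, hnM⟩ : d n = 0 ∧ M < val q (sh (n + 1) d) := Nat.find_spec (hA M hM)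
  have hmin : ∀ i < n, d i = 0 → val q (sh (i + 1) d) ≤ M := fun i hi hi0 => by
    by_contra! hc
    exact Nat.find_min (hA M hM) hi ⟨hi0, hc⟩
  have hNn : N ≤ n := by
    by_contra! hc
    linarith [hb n hc.le hn0]
  obtain ⟨n', hn', hlt⟩ := hA _ ((h.2 n).1 hn0)
  have h1 := (h.2 n').1 hn'
  obtain ⟨e, he, hag, hv⟩ := splice hq h hlt fun i hi hi0 => by
    have hle : (val q (sh (n' + 1) d) - val q (sh (n + 1) d)) / q ^ (n - i) ≤
        val q (sh (n' + 1) d) - val q (sh (n + 1) d) :=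
      div_le_self (by linarith) (one_le_pow₀ hq.le)
    rcases hi.lt_or_eq with hi | rfl
    · linarith [hmin i hi hi0]
    · linarith
  exact ⟨e, he, fun i hi => hag i (hi.trans hNn), hv⟩

/-- If the tails after zeros stay away from `1` while the reflected tails after ones do not, then
`d` is a limit of larger univoque sequences: cut after a late, extremal one and continue with a
fixed tail that is only slightly larger. -/
theorem approx_one {q : ℝ} (hq : 1 < q) {d : ℕ → ℕ} (h : Good q d) {M₀ : ℝ} (hM₀ : M₀ < 1)
    (h0 : ∀ i, d i = 0 → val q (sh (i + 1) d) ≤ M₀)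
    (hB : ∀ M < 1, ∃ i, d i = 1 ∧ M < val q (co (sh (i + 1) d))) (N : ℕ) :
    ∃ e, Good q e ∧ (∀ i ≤ N, e i = d i) ∧ val q d < val q e := by
  obtain ⟨n', hn', hlt'⟩ := hB M₀ hM₀
  obtain ⟨M, hM, hb⟩ := exists_bound (fun i => d i = 1) (fun i => val q (co (sh (i + 1) d)))
    (fun i hi => (h.2 i).2 hi) N
  obtain ⟨n, hn, hlt⟩ := hB (max M (val q (co (sh (n' + 1) d)))) (max_lt hM ((h.2 n').2 hn'))
  obtain ⟨hlt1, hlt2⟩ := max_lt_iff.1 hlt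
  have hNn : N ≤ n := by
    by_contra! hc
    linarith [hb n hc.le hn]
  have h1 := (h.2 n).2 hn
  rw [val_co hq (sh_le h.1 _)] at hlt' hlt2 h1
  rw [val_co hq (sh_le h.1 _)] at hlt2
  obtain ⟨e, he, hag, hv⟩ := splice hq h (n := n) (m' := n' + 1) (by linarith)
    fun i hi hi0 => by
      have hle : (val q (sh (n' + 1) d) - val q (sh (n + 1) d)) / q ^ (n - i) ≤
          val q (sh (n' + 1) d) - val q (sh (n + 1) d) :=
        div_le_self (by linarith) (one_le_pow₀ hq.le)
      linarith [h0 i hi0]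
  exact ⟨e, he, fun i hi => hag i (hi.trans hNn), hv⟩

/-! ### The upper estimate -/

theorem val_strict {p q : ℝ} (hp : 1 < p) (hpq : p < q) {d : ℕ → ℕ} (hd : ∀ i, d i ≤ 1)
    (h0 : 0 < val p d) : val q d < val p d := by
  have h := val_scale hp hpq.le hd
  have hq : 0 < q := by linarith
  by_contra! hc
  nlinarith [mul_le_mul_of_nonneg_left hc hq.le, mul_pos (sub_pos.2 hpq) h0]

/-- Upper estimate when `d` is a limit of larger sequences univoque in the same base. -/
theorem upper_of_approx {x₀ q₀ ε : ℝ} (hx₀ : 0 < x₀) (hq₀ : 1 < q₀) (hε : 0 < ε)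
    (h2 : q₀ + ε ≤ 2) {d : ℕ → ℕ} (h : Good q₀ d) (hv : val q₀ d = x₀)
    (happ : ∀ N : ℕ, ∃ e, Good q₀ e ∧ (∀ i ≤ N, e i = d i) ∧ val q₀ d < val q₀ e) :
    ∃ δ > 0, ∀ x, x₀ ≤ x → x < x₀ + δ → ∃ q ∈ UnivSet x, q ≤ q₀ + ε := by
  let p := q₀ + ε
  have hp : 1 < p := by simp only [p]; linarith
  have hgap : val p d < x₀ := by
    rw [← hv]
    exact val_strict hq₀ (by simp only [p]; linarith) h.1 (by rw [hv]; exact hx₀)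
  have hlim : Tendsto (fun n : ℕ => 1 / (p - 1) * (p⁻¹) ^ n) atTop (nhds 0) := by
    simpa using (tendsto_pow_atTop_nhds_zero_of_lt_one (r := p⁻¹) (by positivity)
      (inv_lt_one_of_one_lt₀ hp)).const_mul (1 / (p - 1))
  obtain ⟨N, hN⟩ := (hlim.eventually_lt_const (sub_pos.2 hgap)).exists
  obtain ⟨e, he, hag, hlt⟩ := happ N
  have hpe : val p e ≤ x₀ := by
    have h3 := eq_tail hp he.1 h.1 (n := N) fun i hi => hag i hi.le
    have h4 : (val p (sh N e) - val p (sh N d)) / p ^ N ≤ 1 / (p - 1) * (p⁻¹) ^ N := by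
      rw [inv_pow, ← div_eq_mul_inv]
      gcongr
      linarith [val_le hp (sh_le he.1 N), val_nonneg hp (sh N d)]
    linarith
  refine ⟨val q₀ e - x₀, by linarith, fun x hx hx' => ?_⟩
  obtain ⟨q, hq, -, hq'⟩ := exists_base hq₀ (show q₀ ≤ p by simp only [p]; linarith) h2 he
    (hpe.trans hx) (by linarith)
  exact ⟨q, hq, hq'⟩

/-- Upper estimate when `d` satisfies its conditions with a margin: it remains univoque in slightly
smaller bases, so the base can be lowered with the digits fixed. -/
theorem upper_of_margin {x₀ q₀ M : ℝ} (hx₀ : 0 < x₀) (hq₀ : 1 < q₀)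
    (h2 : q₀ ≤ 2) (hM : M < 1) {d : ℕ → ℕ} (h : Good q₀ d) (hv : val q₀ d = x₀)
    (h0 : ∀ i, d i = 0 → val q₀ (sh (i + 1) d) ≤ M)
    (h1 : ∀ i, d i = 1 → val q₀ (co (sh (i + 1) d)) ≤ M) :
    ∃ δ > 0, ∀ x, x₀ ≤ x → x < x₀ + δ → ∃ q ∈ UnivSet x, q ≤ q₀ := by
  have hc : ContinuousAt (fun p : ℝ => 1 / (p - 1)) q₀ :=
    continuousAt_const.div (continuousAt_id.sub continuousAt_const) (by simpa using (sub_pos.2 hq₀).ne')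
  have hev := hc.eventually (gt_mem_nhds (show 1 / (q₀ - 1) < 1 / (q₀ - 1) + (1 - M) by linarith))
  have hev' := (hev.filter_mono nhdsWithin_le_nhds).and (Ioo_mem_nhdsLT hq₀)
  obtain ⟨p, hp, hp1, hpq⟩ := hev'.exists
  have hg : Good p d := by
    refine ⟨h.1, fun i => ⟨fun hi => ?_, fun hi => ?_⟩⟩
    · linarith [h0 i hi, val_lip hp1 hpq.le (sh_le h.1 (i + 1))]
    · linarith [h1 i hi, val_lip hp1 hpq.le (co_le (sh (i + 1) d))]
  have hpos : 0 < val p d := by linarith [val_anti hp1 hpq.le h.1]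
  refine ⟨val p d - x₀, by linarith [val_strict hp1 hpq h.1 hpos], fun x hx hx' => ?_⟩
  obtain ⟨q, hq, -, hq'⟩ := exists_base hp1 hpq.le h2 hg (hv.trans_le hx) (by linarith)
  exact ⟨q, hq, hq'⟩

theorem qs_upper {x₀ q₀ ε : ℝ} (hx₀ : 0 < x₀) (hq₀ : q₀ ∈ UnivSet x₀) (h2 : q₀ < 2) (hε : 0 < ε) :
    ∃ δ > 0, ∀ x, x₀ ≤ x → x < x₀ + δ → ∃ q ∈ UnivSet x, q ≤ q₀ + ε := by
  obtain ⟨⟨hq1, -⟩, d, h, hv⟩ := mem_iff.1 hq₀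
  have hε' : 0 < min ε (2 - q₀) := lt_min hε (by linarith)
  have hfin (H : ∀ N : ℕ, ∃ e, Good q₀ e ∧ (∀ i ≤ N, e i = d i) ∧ val q₀ d < val q₀ e) :
      ∃ δ > 0, ∀ x, x₀ ≤ x → x < x₀ + δ → ∃ q ∈ UnivSet x, q ≤ q₀ + ε := by
    obtain ⟨δ, hδ, hx⟩ := upper_of_approx hx₀ hq1 hε'
      (by linarith [min_le_right ε (2 - q₀)]) h hv H
    refine ⟨δ, hδ, fun x hx1 hx2 => ?_⟩
    obtain ⟨q, hq, hle⟩ := hx x hx1 hx2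
    exact ⟨q, hq, by linarith [min_le_left ε (2 - q₀)]⟩
  by_cases hA : ∀ M < 1, ∃ i, d i = 0 ∧ M < val q₀ (sh (i + 1) d)
  · exact hfin (approx_zero hq1 h hA)
  push Not at hA
  obtain ⟨M₀, hM₀, h0⟩ := hA
  by_cases hB : ∀ M < 1, ∃ i, d i = 1 ∧ M < val q₀ (co (sh (i + 1) d))
  · exact hfin (approx_one hq1 h hM₀ h0 hB)
  push Not at hB
  obtain ⟨M₁, hM₁, h1⟩ := hB
  obtain ⟨δ, hδ, hx⟩ := upper_of_margin hx₀ hq1 h2.le (max_lt hM₀ hM₁) h hv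
    (fun i hi => (h0 i hi).trans (le_max_left _ _)) fun i hi => (h1 i hi).trans (le_max_right _ _)
  refine ⟨δ, hδ, fun x hx1 hx2 => ?_⟩
  obtain ⟨q, hq, hle⟩ := hx x hx1 hx2
  exact ⟨q, hq, by linarith⟩

/-- `q_s` is right-continuous at every point of `(0,∞)`. -/
theorem qs_rightContinuous (x₀ : ℝ) (hx₀ : 0 < x₀) :
    Filter.Tendsto qs (nhdsWithin x₀ (Set.Ici x₀)) (nhds (qs x₀)) := by
  rw [Metric.tendsto_nhdsWithin_nhds]
  intro ε hε
  -- the upper estimate, with the base `2` treated apart since it cannot be raised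
  have hup : ∃ δ > 0, ∀ x, x₀ ≤ x → x < x₀ + δ → qs x < qs x₀ + ε := by
    obtain ⟨q₀, hq₀, hlt⟩ := exists_lt_of_csInf_lt (univSet_nonempty hx₀)
      (show sInf (UnivSet x₀) < qs x₀ + ε / 2 by simp only [qs]; linarith)
    rcases hq₀.1.2.lt_or_eq with h2 | h2
    · obtain ⟨δ, hδ, h⟩ := qs_upper hx₀ hq₀ h2 (half_pos hε)
      refine ⟨δ, hδ, fun x hx hx' => ?_⟩
      obtain ⟨q, hq, hle⟩ := h x hx hx'
      linarith [qs_le hq]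
    · refine ⟨1, one_pos, fun x hx _ => ?_⟩
      obtain ⟨q, hq⟩ := univSet_nonempty (hx₀.trans_le hx)
      linarith [qs_le hq, hq.1.2]
  obtain ⟨δ, hδ, hup⟩ := hup
  refine ⟨min δ (ε / 4 * x₀), lt_min hδ (by positivity), fun x hx hd => ?_⟩
  have hx : x₀ ≤ x := hx
  rw [Real.dist_eq, abs_of_nonneg (by linarith), lt_min_iff] at hd
  have h1 := hup x hx (by linarith)
  have h2 : qs x₀ - ε / 2 ≤ qs x :=
    le_csInf (univSet_nonempty (hx₀.trans_le hx)) fun q hq => by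
      linarith [qs_lower hx₀ (half_pos hε) hx (by linarith) hq]
  rw [Real.dist_eq, abs_lt]
  exact ⟨by linarith, by linarith⟩
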